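/- Let $F$ be a field of characteristic zero, and for $\lambda \in F$ and $s \geq 1$ let $\langle \lambda \rangle_s$ denote the $F$-subspace of the space of sequences $F^{\mathbb{N}}$ spanned by the sequences $n \mapsto \lambda^n \binom{n}{k}$ for $0 \leq k \leq s-1$ (and $\langle \lambda \rangle_0 = 0$). Then for nonzero $\lambda, \mu \in F$ and positive integers $i, j$, the subspace spanned by all termwise products $c \cdot d$ with $c \in \langle \lambda \rangle_i$, $d \in \langle \mu \rangle_j$ equals $\langle \lambda\mu \rangle_{i+j-1}$. -/

import Mathlib

/-- `⟨λ⟩ₛ`: the span of the sequences `n ↦ λ^n * (n.choose k)`, `0 ≤ k ≤ s-1`. -/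
def expSpan (F : Type*) [Field F] (lam : F) (s : ℕ) : Submodule F (ℕ → F) :=
  Submodule.span F {f | ∃ k < s, f = fun n => lam ^ n * (Nat.choose n k : F)}

/-- The product of two subspaces of the sequence space: the span of termwise products. -/
def mulSpan (F : Type*) [Field F] (H H' : Submodule F (ℕ → F)) : Submodule F (ℕ → F) :=
  Submodule.span F {f | ∃ c ∈ H, ∃ d ∈ H', f = c * d}

/-!
Factoring out the geometric sequences `λⁿ` and `μⁿ` reduces the claim to the spans `Bₛ` of the
binomial sequences `n ↦ n.choose k`, `k < s`. The expansion of `n.choose a * n.choose b` in binomial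
sequences has top term `(a + b).choose a * n.choose (a + b)`, whence `B_{a+1} B_{b+1} ⊆ B_{a+b+1}`.
The product space is stable under the forward difference operator, which lowers `n.choose (k + 1)`
to `n.choose k`; so, as soon as the top coefficient `(a + b).choose a` is invertible, successive
differences of that one product produce every binomial sequence of index at most `a + b`.
-/

open scoped fwdDiff

theorem choose_mul_choose_eq_sum_range (n a b : ℕ) :
    n.choose a * n.choose b =
      ∑ l ∈ Finset.range (a + 1), b.choose (a - l) * (b + l).choose b * n.choose (b + l) := by
  rcases lt_or_ge n b with hn | hn
  · rw [Nat.choose_eq_zero_of_lt hn, mul_zero]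
    exact (Finset.sum_eq_zero fun l _ => by
      rw [Nat.choose_eq_zero_of_lt (hn.trans_le (Nat.le_add_right b l)), mul_zero]).symm
  · have vandermonde :
        n.choose a = ∑ l ∈ Finset.range (a + 1), (n - b).choose l * b.choose (a - l) := by
      rw [← Finset.Nat.sum_antidiagonal_eq_sum_range_succ fun l k => (n - b).choose l * b.choose k,
        ← Nat.add_choose_eq, Nat.sub_add_cancel hn]
    rw [vandermonde, Finset.sum_mul]
    refine Finset.sum_congr rfl fun l _ => ?_
    have trinomial : n.choose (b + l) * (b + l).choose b = n.choose b * (n - b).choose l := by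
      rw [Nat.choose_mul (Nat.le_add_right b l), Nat.add_sub_cancel_left]
    calc (n - b).choose l * b.choose (a - l) * n.choose b
        = b.choose (a - l) * (n.choose b * (n - b).choose l) := by ring
      _ = b.choose (a - l) * (b + l).choose b * n.choose (b + l) := by rw [← trinomial]; ring

section BinomialSpan

variable (R : Type*) [CommRing R]

/-- The sequence `n ↦ n.choose k` with values in `R`. -/
def binomialSeq (k : ℕ) : ℕ → R := fun n => n.choose k

/-- The span of the binomial sequences `n ↦ n.choose k` with `k < s`. It is `⟨1⟩ₛ`, over an
arbitrary commutative ring. -/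
def binomialSpan (s : ℕ) : Submodule R (ℕ → R) :=
  Submodule.span R (binomialSeq R '' Set.Iio s)

theorem fwdDiff_binomialSeq_zero : Δ_[1] (binomialSeq R 0) = 0 := by
  ext n
  simp [fwdDiff, binomialSeq]

theorem fwdDiff_binomialSeq_succ (k : ℕ) :
    Δ_[1] (binomialSeq R (k + 1)) = binomialSeq R k := by
  ext n
  simp [fwdDiff, binomialSeq, Nat.choose_succ_succ']

theorem binomialSeq_mul_binomialSeq (a b : ℕ) :
    binomialSeq R a * binomialSeq R b =
      ∑ l ∈ Finset.range (a + 1),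
        (b.choose (a - l) * (b + l).choose b : R) • binomialSeq R (b + l) := by
  ext n
  simpa [binomialSeq] using congrArg (Nat.cast : ℕ → R) (choose_mul_choose_eq_sum_range n a b)

theorem binomialSpan_zero : binomialSpan R 0 = ⊥ := by
  simp [binomialSpan]

theorem binomialSpan_succ (s : ℕ) :
    binomialSpan R (s + 1) = Submodule.span R {binomialSeq R s} ⊔ binomialSpan R s := by
  rw [binomialSpan, binomialSpan, Set.Iio_add_one_eq_Iic, ← Set.Iio_insert,
    Set.image_insert_eq, Submodule.span_insert]

theorem binomialSpan_mono : Monotone (binomialSpan R) := fun _ _ hst =>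
  Submodule.span_mono (Set.image_mono (Set.Iio_subset_Iio hst))

variable {R}

theorem binomialSeq_mem_binomialSpan {k s : ℕ} (hks : k < s) :
    binomialSeq R k ∈ binomialSpan R s :=
  Submodule.subset_span ⟨k, hks, rfl⟩

theorem fwdDiff_mem_binomialSpan {s : ℕ} {f : ℕ → R} (hf : f ∈ binomialSpan R s) :
    Δ_[1] f ∈ binomialSpan R (s - 1) := by
  induction hf using Submodule.span_induction with
  | mem f hf =>
    obtain ⟨k, hks : k < s, rfl⟩ := hf
    cases k with
    | zero => simp only [fwdDiff_binomialSeq_zero, zero_mem]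
    | succ k =>
      rw [fwdDiff_binomialSeq_succ]
      exact binomialSeq_mem_binomialSpan (by omega)
  | zero =>
    have fwdDiff_zero : Δ_[1] (0 : ℕ → R) = 0 := fwdDiff_const 1 0
    simp only [fwdDiff_zero, zero_mem]
  | add f g _ _ hf hg =>
    rw [fwdDiff_add]
    exact add_mem hf hg
  | smul c f _ hf =>
    rw [fwdDiff_const_smul]
    exact Submodule.smul_mem _ c hf

theorem fwdDiff_mem_mul {A : Type*} [AddCommMonoid A] {h : A} {M N : Submodule R (A → R)}
    (hM : ∀ f ∈ M, Δ_[h] f ∈ M) (hN : ∀ f ∈ N, Δ_[h] f ∈ N) :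
    ∀ f ∈ M * N, Δ_[h] f ∈ M * N := by
  intro f hf
  refine Submodule.mul_induction_on hf (fun c hc d hd => ?_) fun f g hf hg => ?_
  · have leibniz : Δ_[h] (c * d) = Δ_[h] c * d + c * Δ_[h] d + Δ_[h] c * Δ_[h] d :=
      fwdDiff_smul h c d
    rw [leibniz]
    exact add_mem (add_mem (Submodule.mul_mem_mul (hM c hc) hd)
      (Submodule.mul_mem_mul hc (hN d hd))) (Submodule.mul_mem_mul (hM c hc) (hN d hd))
  · rw [fwdDiff_add]
    exact add_mem hf hg

theorem binomialSpan_succ_le_of_fwdDiff_mem {W : Submodule R (ℕ → R)}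
    (hW : ∀ f ∈ W, Δ_[1] f ∈ W) {c : R} (hc : IsUnit c) {m : ℕ} {g : ℕ → R}
    (hg : g ∈ binomialSpan R m) (hmem : c • binomialSeq R m + g ∈ W) :
    binomialSpan R (m + 1) ≤ W := by
  have lower_le : binomialSpan R m ≤ W := by
    cases m with
    | zero => simp only [binomialSpan_zero, bot_le]
    | succ m =>
      have hΔg : Δ_[1] g ∈ binomialSpan R m := by
        simpa only [Nat.add_sub_cancel] using fwdDiff_mem_binomialSpan hg
      have hΔmem : c • binomialSeq R m + Δ_[1] g ∈ W := by
        simpa only [fwdDiff_add, fwdDiff_const_smul, fwdDiff_binomialSeq_succ] using hW _ hmem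
      exact binomialSpan_succ_le_of_fwdDiff_mem hW hc hΔg hΔmem
  rw [binomialSpan_succ, sup_le_iff, Submodule.span_singleton_le_iff_mem]
  exact ⟨(W.smul_mem_iff_of_isUnit hc).1 ((W.add_mem_iff_left (lower_le hg)).1 hmem), lower_le⟩

theorem binomialSpan_mul_le (s t : ℕ) :
    binomialSpan R s * binomialSpan R t ≤ binomialSpan R (s + t - 1) := by
  rw [binomialSpan, binomialSpan, Submodule.span_mul_span, Submodule.span_le]
  rintro _ ⟨_, ⟨a, ha : a < s, rfl⟩, _, ⟨b, hb : b < t, rfl⟩, rfl⟩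
  simp only [binomialSeq_mul_binomialSeq]
  refine sum_mem fun l hl => Submodule.smul_mem _ _ (binomialSeq_mem_binomialSpan ?_)
  rw [Finset.mem_range] at hl
  omega

theorem binomialSeq_mul_sub_mem_binomialSpan (a b : ℕ) :
    binomialSeq R a * binomialSeq R b - ((a + b).choose a : R) • binomialSeq R (a + b) ∈
      binomialSpan R (a + b) := by
  have top_coeff : (b.choose (a - a) * (b + a).choose b : R) = (a + b).choose a := by
    rw [Nat.sub_self, Nat.choose_zero_right, Nat.cast_one, one_mul, add_comm b a,
      Nat.choose_symm_add]
  rw [binomialSeq_mul_binomialSeq, Finset.sum_range_succ, top_coeff, add_comm b a,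
    add_sub_cancel_right]
  refine sum_mem fun l hl => Submodule.smul_mem _ _ (binomialSeq_mem_binomialSpan ?_)
  rw [Finset.mem_range] at hl
  omega

theorem binomialSpan_mul_binomialSpan {a b : ℕ} (hab : IsUnit ((a + b).choose a : R)) :
    binomialSpan R (a + 1) * binomialSpan R (b + 1) = binomialSpan R (a + b + 1) := by
  apply le_antisymm
  · exact (binomialSpan_mul_le (a + 1) (b + 1)).trans (binomialSpan_mono R (by omega))
  · have fwdDiff_stable (s : ℕ) : ∀ f ∈ binomialSpan R s, Δ_[1] f ∈ binomialSpan R s :=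
      fun f hf => binomialSpan_mono R (Nat.sub_le s 1) (fwdDiff_mem_binomialSpan hf)
    refine binomialSpan_succ_le_of_fwdDiff_mem
      (fwdDiff_mem_mul (fwdDiff_stable (a + 1)) (fwdDiff_stable (b + 1))) hab
      (binomialSeq_mul_sub_mem_binomialSpan a b) ?_
    rw [add_sub_cancel]
    exact Submodule.mul_mem_mul (binomialSeq_mem_binomialSpan a.lt_succ_self)
      (binomialSeq_mem_binomialSpan b.lt_succ_self)

end BinomialSpan

section SequenceSpaces

variable (F : Type*) [Field F]

theorem mulSpan_eq_mul (H H' : Submodule F (ℕ → F)) : mulSpan F H H' = H * H' := by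
  rw [Submodule.mul_eq_span_mul_set, mulSpan]
  congr 1
  ext f
  simp only [Set.mem_mul, Set.mem_ofPred_eq, SetLike.mem_coe, eq_comm]

theorem expSpan_eq_span_singleton_mul (lam : F) (s : ℕ) :
    expSpan F lam s = Submodule.span F {fun n => lam ^ n} * binomialSpan F s := by
  rw [binomialSpan, Submodule.span_mul_span, expSpan, Set.singleton_mul, Set.image_image]
  congr 1
  ext f
  simp only [Set.mem_ofPred_eq, Set.mem_image, Set.mem_Iio, eq_comm]
  rfl

theorem expSpan_mul_expSpan (lam mu : F) (i j : ℕ) :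
    expSpan F lam i * expSpan F mu j =
      Submodule.span F {fun n => (lam * mu) ^ n} * (binomialSpan F i * binomialSpan F j) := by
  have geometric_mul : (fun n => lam ^ n : ℕ → F) * (fun n => mu ^ n) = fun n => (lam * mu) ^ n :=
    funext fun n => (mul_pow lam mu n).symm
  rw [expSpan_eq_span_singleton_mul, expSpan_eq_span_singleton_mul, mul_mul_mul_comm,
    Submodule.span_mul_span, Set.singleton_mul_singleton, geometric_mul]

end SequenceSpaces

theorem stmt_15_general (F : Type*) [Field F] (lam mu : F) (i j : ℕ) (hi : 1 ≤ i) (hj : 1 ≤ j)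
    (hchoose : ((i + j - 2).choose (i - 1) : F) ≠ 0) :
    mulSpan F (expSpan F lam i) (expSpan F mu j) = expSpan F (lam * mu) (i + j - 1) := by
  obtain ⟨a, rfl⟩ := Nat.exists_eq_add_of_le' hi
  obtain ⟨b, rfl⟩ := Nat.exists_eq_add_of_le' hj
  have top_index : a + 1 + (b + 1) - 2 = a + b := by omega
  have span_index : a + 1 + (b + 1) - 1 = a + b + 1 := by omega
  rw [top_index, Nat.add_sub_cancel] at hchoose
  rw [mulSpan_eq_mul, expSpan_mul_expSpan, binomialSpan_mul_binomialSpan hchoose.isUnit, span_index,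
    expSpan_eq_span_singleton_mul]

theorem stmt_15 (F : Type*) [Field F] [CharZero F] (lam mu : F)
    (hlam : lam ≠ 0) (hmu : mu ≠ 0) (i j : ℕ) (hi : 1 ≤ i) (hj : 1 ≤ j) :
    mulSpan F (expSpan F lam i) (expSpan F mu j) = expSpan F (lam * mu) (i + j - 1) :=
  stmt_15_general F lam mu i j hi hj (Nat.cast_ne_zero.2 (Nat.choose_ne_zero (by omega)))
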